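/- arXiv:2603.20794 — 2 statements merged into one kernel-verified Lean document; each statement's English description precedes it below -/
import Mathlib

section
/- Let X, Y be Banach spaces and f : X → Y Fréchet differentiable such that f'(x) is invertible for every x and x ↦ (f'(x))⁻¹ ∈ L(Y,X) is locally Lipschitz. If ‖(f'(x))⁻¹‖ ≤ c(‖x‖ + 1) for all x ∈ X and some constant c, then f is surjective; moreover f has a continuous right inverse ψ : Y → X with f ∘ ψ = id_Y. -/
open Set Filter Topology

/-- `γ` is a lift of `p` through `f` on `s`, starting at `x₀` at time `0`. -/
structure IsLiftOn {X Y : Type*} [TopologicalSpace X]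
    (f : X → Y) (p : ℝ → Y) (x₀ : X) (s : Set ℝ) (γ : ℝ → X) : Prop where
  continuousOn : ContinuousOn γ s
  zero : γ 0 = x₀
  lifts : ∀ t ∈ s, f (γ t) = p t

theorem IsLiftOn.mono {X Y : Type*} [TopologicalSpace X]
    {f : X → Y} {p : ℝ → Y} {x₀ : X} {s s' : Set ℝ} {γ : ℝ → X}
    (h : IsLiftOn f p x₀ s γ) (hs : s' ⊆ s) : IsLiftOn f p x₀ s' γ :=
  ⟨h.continuousOn.mono hs, h.zero, fun t ht => h.lifts t (hs ht)⟩

/-- A lift on `[0, T)` through a local homeomorphism that converges at `T` extends beyond `T`. -/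
theorem IsLiftOn.exists_extension {X Y : Type*} [TopologicalSpace X] [TopologicalSpace Y]
    {f : X → Y} (homeo : IsLocalHomeomorph f) {p : ℝ → Y} (hp : Continuous p) {x₀ x : X}
    {T : ℝ} (hT : 0 ≤ T) {γ : ℝ → X} (hγ : IsLiftOn f p x₀ (Ico 0 T) γ)
    (hx : Tendsto γ (𝓝[Ico 0 T] T) (𝓝 x)) (hfx : f x = p T) (hx₀ : T = 0 → x = x₀) :
    ∃ T' > T, ∃ γ', IsLiftOn f p x₀ (Icc 0 T') γ' := by
  obtain ⟨e, hxe, he⟩ := homeo x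
  have hfe : ∀ z, f z = e z := fun z => congrFun he z
  have hpT : p T ∈ e.target := by
    rw [← hfx, hfe]
    exact e.map_source hxe
  have h1 : ∀ᶠ t in 𝓝 T, p t ∈ e.target :=
    hp.continuousAt.eventually_mem (e.open_target.mem_nhds hpT)
  have h2 : ∀ᶠ t in 𝓝 T, t ∈ Ico 0 T → γ t ∈ e.source :=
    eventually_nhdsWithin_iff.1 (hx.eventually_mem (e.open_source.mem_nhds hxe))
  obtain ⟨δ, hδ, hball⟩ := Metric.eventually_nhds_iff_ball.1 (h1.and h2)
  have hsymm : ∀ t ∈ Metric.ball T δ, 0 ≤ t → t < T → γ t = e.symm (p t) := by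
    intro t ht h0 hlt
    rw [← hγ.lifts t ⟨h0, hlt⟩, hfe, e.left_inv ((hball t ht).2 ⟨h0, hlt⟩)]
  refine ⟨T + δ / 2, by linarith, fun t => if t < T then γ t else e.symm (p t), ?_, ?_, ?_⟩
  · intro t ht
    rcases lt_or_ge t T with hlt | hge
    · have hc : ContinuousWithinAt γ (Icc 0 (T + δ / 2)) t := by
        refine (hγ.continuousOn t ⟨ht.1, hlt⟩).mono_of_mem_nhdsWithin ?_
        filter_upwards [self_mem_nhdsWithin, mem_nhdsWithin_of_mem_nhds (Iio_mem_nhds hlt)]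
          with s hs hsT using ⟨hs.1, hsT⟩
      refine hc.congr_of_eventuallyEq ?_ (if_pos hlt)
      filter_upwards [mem_nhdsWithin_of_mem_nhds (Iio_mem_nhds hlt)] with s hs using if_pos hs
    · have htb : t ∈ Metric.ball T δ := by
        rw [Metric.mem_ball, Real.dist_eq, abs_of_nonneg (by linarith)]
        linarith [ht.2]
      have hc : ContinuousAt (fun t => e.symm (p t)) t :=
        ContinuousAt.comp (f := p) (e.continuousAt_symm (hball t htb).1) hp.continuousAt
      refine hc.continuousWithinAt.congr_of_eventuallyEq ?_ (if_neg hge.not_gt)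
      filter_upwards [self_mem_nhdsWithin,
        mem_nhdsWithin_of_mem_nhds (Metric.isOpen_ball.mem_nhds htb)] with s hs hsb
      split_ifs with hsT
      · exact hsymm s hsb hs.1 hsT
      · rfl
  · rcases hT.eq_or_lt with h0 | h0
    · subst h0
      simp only [lt_irrefl, if_false]
      rw [← hfx, hfe, e.left_inv hxe, hx₀ rfl]
    · simp only [h0, if_true, hγ.zero]
  · intro t ht
    split_ifs with hlt
    · exact hγ.lifts t ⟨ht.1, hlt⟩
    · have htb : t ∈ Metric.ball T δ := by
        rw [Metric.mem_ball, Real.dist_eq, abs_of_nonneg (by linarith)]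
        linarith [ht.2]
      rw [hfe, e.right_inv (hball t htb).1]

/-- A path lifts through a local homeomorphism as soon as all of its partial lifts converge. -/
theorem IsLocalHomeomorph.exists_isLiftOn_Icc {X Y : Type*} [TopologicalSpace X] [T2Space X]
    [TopologicalSpace Y] [T2Space Y] {f : X → Y} (homeo : IsLocalHomeomorph f)
    {p : ℝ → Y} (hp : Continuous p) {x₀ : X} (hx₀ : f x₀ = p 0) {b : ℝ}
    (hlim : ∀ T, 0 < T → T ≤ b → ∀ γ, IsLiftOn f p x₀ (Ico 0 T) γ →
      ∃ x, Tendsto γ (𝓝[Ico 0 T] T) (𝓝 x)) :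
    ∃ γ, IsLiftOn f p x₀ (Icc 0 b) γ := by
  by_contra hb
  let S : Set ℝ := {T | 0 ≤ T ∧ ∃ γ, IsLiftOn f p x₀ (Icc 0 T) γ}
  have h0S : (0 : ℝ) ∈ S := by
    refine ⟨le_rfl, fun _ => x₀, continuousOn_const, rfl, fun t ht => ?_⟩
    rw [Icc_self, mem_singleton_iff] at ht
    rw [ht, hx₀]
  have hSb : ∀ T ∈ S, T ≤ b := by
    rintro T ⟨-, γ, hγ⟩
    by_contra! hlt
    exact hb ⟨γ, hγ.mono (Icc_subset_Icc_right hlt.le)⟩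
  have hbdd : BddAbove S := ⟨b, hSb⟩
  set T := sSup S
  have hT0 : 0 ≤ T := le_csSup hbdd h0S
  have hTb : T ≤ b := csSup_le ⟨0, h0S⟩ hSb
  have hlift : ∀ s, ∃ γ, s ∈ Ico 0 T → IsLiftOn f p x₀ (Icc 0 s) γ := by
    intro s
    by_cases hs : s ∈ Ico 0 T
    · obtain ⟨u, ⟨-, γ, hγ⟩, hsu⟩ := exists_lt_of_lt_csSup ⟨0, h0S⟩ hs.2
      exact ⟨γ, fun _ => hγ.mono (Icc_subset_Icc_right hsu.le)⟩
    · exact ⟨fun _ => x₀, fun h => absurd h hs⟩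
  choose Γ hΓ using hlift
  have hagree : ∀ s ∈ Ico 0 T, ∀ t ∈ Icc 0 s, Γ t t = Γ s t := by
    intro s hs t ht
    have htT : t ∈ Ico 0 T := ⟨ht.1, ht.2.trans_lt hs.2⟩
    have h1 := hΓ t htT
    have h2 := (hΓ s hs).mono (Icc_subset_Icc_right ht.2)
    exact (T2Space.isSeparatedMap f).eqOn_of_comp_eqOn homeo.isLocallyInjective
      isPreconnected_Icc h1.continuousOn h2.continuousOn
      (fun u hu => (h1.lifts u hu).trans (h2.lifts u hu).symm)
      (left_mem_Icc.2 ht.1) (h1.zero.trans h2.zero.symm) (right_mem_Icc.2 ht.1)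
  have hglue : ∃ γ, IsLiftOn f p x₀ (Ico 0 T) γ := by
    rcases hT0.eq_or_lt with h0 | h0
    · refine ⟨fun _ => x₀, ?_⟩
      rw [← h0, Ico_self]
      exact ⟨continuousOn_empty _, rfl, by simp⟩
    · refine ⟨fun t => Γ t t, ?_, (hΓ 0 ⟨le_rfl, h0⟩).zero,
        fun t ht => (hΓ t ht).lifts t (right_mem_Icc.2 ht.1)⟩
      intro t ht
      obtain ⟨s, hts, hsT⟩ := exists_between ht.2
      have hs : s ∈ Ico 0 T := ⟨ht.1.trans hts.le, hsT⟩
      have hc : ContinuousWithinAt (Γ s) (Ico 0 T) t := by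
        refine ((hΓ s hs).continuousOn t ⟨ht.1, hts.le⟩).mono_of_mem_nhdsWithin ?_
        filter_upwards [self_mem_nhdsWithin, mem_nhdsWithin_of_mem_nhds (Iio_mem_nhds hts)]
          with u hu hus using ⟨hu.1, le_of_lt hus⟩
      refine hc.congr_of_eventuallyEq ?_ (hagree s hs t ⟨ht.1, hts.le⟩)
      filter_upwards [self_mem_nhdsWithin, mem_nhdsWithin_of_mem_nhds (Iio_mem_nhds hts)]
        with u hu hus using hagree s hs u ⟨hu.1, le_of_lt hus⟩
  obtain ⟨γ, hγ⟩ := hglue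
  have hend : ∃ x, Tendsto γ (𝓝[Ico 0 T] T) (𝓝 x) ∧ f x = p T ∧ (T = 0 → x = x₀) := by
    rcases hT0.eq_or_lt with h0 | h0
    · refine ⟨x₀, ?_, by rw [← h0, hx₀], fun _ => rfl⟩
      rw [← h0, Ico_self, nhdsWithin_empty]
      exact tendsto_bot
    · obtain ⟨x, hx⟩ := hlim T h0 hTb γ hγ
      refine ⟨x, hx, ?_, fun h => absurd h h0.ne'⟩
      have : (𝓝[Ico 0 T] T).NeBot := by
        rw [nhdsWithin_Ico_eq_nhdsLT h0]
        infer_instance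
      refine tendsto_nhds_unique ((homeo.continuous.tendsto x).comp hx) ?_
      refine ((hp.tendsto T).mono_left nhdsWithin_le_nhds).congr' ?_
      filter_upwards [self_mem_nhdsWithin] with t ht using (hγ.lifts t ht).symm
  obtain ⟨x, hx, hfx, hxx₀⟩ := hend
  obtain ⟨T', hT', γ', hγ'⟩ := hγ.exists_extension homeo hp hT0 hx hfx hxx₀
  exact (le_csSup hbdd ⟨hT0.trans hT'.le, γ', hγ'⟩).not_gt hT'

/-- The lift of a path through a map with invertible strict derivative is differentiable. -/
theorem IsLiftOn.hasDerivWithinAt {X Y : Type*} [NormedAddCommGroup X] [NormedSpace ℝ X]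
    [CompleteSpace X] [NormedAddCommGroup Y] [NormedSpace ℝ Y]
    {f : X → Y} {p : ℝ → Y} {x₀ : X} {s : Set ℝ} {γ : ℝ → X} (hγ : IsLiftOn f p x₀ s γ)
    {t : ℝ} (ht : t ∈ s) {f' : X ≃L[ℝ] Y} (hf : HasStrictFDerivAt f (f' : X →L[ℝ] Y) (γ t))
    {v : Y} (hp : HasDerivWithinAt p v s t) :
    HasDerivWithinAt γ (f'.symm v) s t := by
  have hg := hf.to_localInverse.hasFDerivAt
  rw [hγ.lifts t ht] at hg
  refine (hg.comp_hasDerivWithinAt t hp).congr_of_eventuallyEq ?_ ?_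
  · filter_upwards [self_mem_nhdsWithin,
      (hγ.continuousOn t ht).eventually hf.eventually_left_inverse] with u hu hgu
    rw [Function.comp_apply, ← hγ.lifts u hu, hgu]
  · rw [Function.comp_apply, ← hγ.lifts t ht, hf.localInverse_apply_image]

/-- A curve on `[0, T)` whose speed grows at most affinely with its norm converges at `T`. -/
theorem exists_tendsto_of_norm_deriv_le {X : Type*} [NormedAddCommGroup X] [NormedSpace ℝ X]
    [CompleteSpace X] {γ γ' : ℝ → X} {T K : ℝ} (hT : 0 < T) (hK : 0 ≤ K)
    (hγ : ∀ t ∈ Ico 0 T, HasDerivWithinAt γ (γ' t) (Ico 0 T) t)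
    (hbound : ∀ t ∈ Ico 0 T, ‖γ' t‖ ≤ K * (‖γ t‖ + 1)) :
    ∃ x, Tendsto γ (𝓝[Ico 0 T] T) (𝓝 x) := by
  have hnorm : ∀ t ∈ Ico 0 T, ‖γ t‖ ≤ gronwallBound ‖γ 0‖ K K T := by
    intro t ht
    have hsub : Icc 0 t ⊆ Ico 0 T := fun u hu => ⟨hu.1, hu.2.trans_lt ht.2⟩
    have h := norm_le_gronwallBound_of_norm_deriv_right_le (f := γ) (f' := γ') (a := 0) (b := t)
      (K := K) (ε := K) (fun u hu => ((hγ u (hsub hu)).mono hsub).continuousWithinAt)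
      (fun u hu => (hγ u (hsub (Ico_subset_Icc_self hu))).mono_of_mem_nhdsWithin <| by
        filter_upwards [self_mem_nhdsWithin, mem_nhdsWithin_of_mem_nhds (Iio_mem_nhds hu.2)]
          with w hw hwt using ⟨hu.1.trans hw, lt_trans hwt ht.2⟩)
      le_rfl (fun u hu => by linarith [hbound u (hsub (Ico_subset_Icc_self hu))])
      t (right_mem_Icc.2 ht.1)
    rw [sub_zero] at h
    exact h.trans (gronwallBound_mono (norm_nonneg _) hK hK ht.2.le)
  have hM : 0 ≤ gronwallBound ‖γ 0‖ K K T := (norm_nonneg _).trans (hnorm 0 ⟨le_rfl, hT⟩)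
  have hlip : LipschitzOnWith (K * (gronwallBound ‖γ 0‖ K K T + 1)).toNNReal γ (Ico 0 T) := by
    refine (convex_Ico 0 T).lipschitzOnWith_of_nnnorm_hasDerivWithin_le hγ fun t ht => ?_
    rw [← NNReal.coe_le_coe, coe_nnnorm, Real.coe_toNNReal _ (by positivity)]
    refine (hbound t ht).trans ?_
    gcongr
    exact hnorm t ht
  have : (𝓝[Ico 0 T] T).NeBot := by
    rw [nhdsWithin_Ico_eq_nhdsLT hT]
    infer_instance
  have hcauchy : Cauchy (map γ (𝓝[Ico 0 T] T)) := by
    have hc : Cauchy (𝓝[Ico 0 T] T) := cauchy_nhds.mono nhdsWithin_le_nhds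
    exact hc.map_of_le hlip.uniformContinuousOn (le_principal_iff.2 self_mem_nhdsWithin)
  exact cauchy_map_iff_exists_tendsto.1 hcauchy

theorem global_inverse_linear_growth
    {X Y : Type*} [NormedAddCommGroup X] [NormedSpace ℝ X] [CompleteSpace X]
    [NormedAddCommGroup Y] [NormedSpace ℝ Y] [CompleteSpace Y]
    (f : X → Y) (f' : X → (X →L[ℝ] Y)) (finv : X → (Y →L[ℝ] X))
    (hf' : ∀ x : X, HasFDerivAt f (f' x) x)
    (hinv : ∀ x : X,
      (f' x).comp (finv x) = ContinuousLinearMap.id ℝ Y ∧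
      (finv x).comp (f' x) = ContinuousLinearMap.id ℝ X)
    (hlip : LocallyLipschitz finv)
    (c : ℝ) (hgrowth : ∀ x : X, ‖finv x‖ ≤ c * (‖x‖ + 1)) :
    Function.Surjective f ∧
      ∃ ψ : Y → X, Continuous ψ ∧ ∀ y : Y, f (ψ y) = y := by
  suffices h : ∃ ψ : Y → X, Continuous ψ ∧ ∀ y : Y, f (ψ y) = y from
    ⟨fun y => h.elim fun ψ hψ => ⟨ψ y, hψ.2 y⟩, h⟩
  let E : X → (X ≃L[ℝ] Y) := fun x => ContinuousLinearEquiv.equivOfInverse (f' x) (finv x)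
    (fun z => DFunLike.congr_fun (hinv x).2 z) (fun z => DFunLike.congr_fun (hinv x).1 z)
  have hE : ∀ x, (E x : X →L[ℝ] Y) = f' x := fun x => rfl
  have hEsymm : ∀ x, ((E x).symm : Y →L[ℝ] X) = finv x := fun x => rfl
  have hcont : Continuous f' := by
    have heq : f' = fun x => ContinuousLinearMap.inverse (finv x) := by
      funext x
      rw [← hEsymm, ContinuousLinearMap.inverse_equiv, ContinuousLinearEquiv.symm_symm, hE]
    rw [heq, continuous_iff_continuousAt]
    intro x
    have hi := (contDiffAt_map_inverse (𝕜 := ℝ) (n := 0) (E x).symm).continuousAt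
    rw [hEsymm] at hi
    exact hi.comp hlip.continuous.continuousAt
  have hstrict : ∀ x, HasStrictFDerivAt f (E x : X →L[ℝ] Y) x := fun x =>
    hasStrictFDerivAt_of_hasFDerivAt_of_continuousAt (.of_forall hf') hcont.continuousAt
  have homeo : IsLocalHomeomorph f := fun x =>
    ⟨(hstrict x).toOpenPartialHomeomorph f, (hstrict x).mem_toOpenPartialHomeomorph_source, rfl⟩
  have hc : 0 ≤ c := by simpa using (norm_nonneg _).trans (hgrowth 0)
  have hlift : ∀ y, ∃ γ, IsLiftOn f (fun t : ℝ => f 0 + t • (y - f 0)) 0 (Icc 0 1) γ := by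
    intro y
    refine homeo.exists_isLiftOn_Icc (by fun_prop) (by simp) fun T hT _ γ hγ => ?_
    refine exists_tendsto_of_norm_deriv_le (γ' := fun t => finv (γ t) (y - f 0))
      (K := c * ‖y - f 0‖) hT (by positivity) (fun t ht => ?_) fun t _ => ?_
    · have hp : HasDerivAt (fun t : ℝ => f 0 + t • (y - f 0)) (y - f 0) t := by
        simpa using ((hasDerivAt_id t).smul_const (y - f 0)).const_add (f 0)
      exact hγ.hasDerivWithinAt ht (hstrict (γ t)) hp.hasDerivWithinAt
    · calc ‖finv (γ t) (y - f 0)‖ ≤ ‖finv (γ t)‖ * ‖y - f 0‖ := (finv (γ t)).le_opNorm _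
        _ ≤ c * (‖γ t‖ + 1) * ‖y - f 0‖ := by gcongr; exact hgrowth _
        _ = c * ‖y - f 0‖ * (‖γ t‖ + 1) := by ring
  choose Γ hΓ using hlift
  have hΓcont : Continuous fun q : unitInterval × Y => Γ q.2 q.1 := by
    refine homeo.continuous_lift (T2Space.isSeparatedMap f)
      ⟨fun q : unitInterval × Y => f 0 + (q.1 : ℝ) • (q.2 - f 0), by fun_prop⟩ ?_ ?_ fun y => ?_
    · funext q
      exact (hΓ q.2).lifts q.1 q.1.2
    · exact continuous_const.congr fun y => (hΓ y).zero.symm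
    · exact (hΓ y).continuousOn.comp_continuous continuous_subtype_val fun t => t.2
  refine ⟨fun y => Γ y 1, hΓcont.comp (Continuous.prodMk_right (1 : unitInterval)), fun y => ?_⟩
  simpa using (hΓ y).lifts 1 (right_mem_Icc.2 zero_le_one)
end

section
/- Let X, Y be Banach spaces and f : X → Y Fréchet differentiable, coercive (‖x_n‖ → ∞ implies ‖f(x_n)‖ → ∞), with f'(x) invertible for every x, x ↦ (f'(x))⁻¹ locally Lipschitz, and sup_{x∈P} ‖(f'(x))⁻¹‖ < ∞ for every closed bounded P ⊆ X. Then f is surjective and admits a continuous right inverse ψ : Y → X with f ∘ ψ = id_Y. -/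
open Set Filter Topology
open scoped NNReal unitInterval

/-- A continuous path can be lifted through a local homeomorphism defined on a complete space as
soon as all its partial lifts with the prescribed starting point are Lipschitz with a common
constant. -/
theorem IsLocalHomeomorph.exists_lift_Icc_of_lipschitzOnWith {E B : Type*} [MetricSpace E]
    [CompleteSpace E] [TopologicalSpace B] [T2Space B] {p : E → B} (hp : IsLocalHomeomorph p)
    {γ : ℝ → B} (hγ : Continuous γ) {e : E} (he : p e = γ 0) {K : ℝ≥0}
    (hK : ∀ T ∈ Icc (0 : ℝ) 1, ∀ g : ℝ → E, ContinuousOn g (Icc 0 T) → g 0 = e →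
      (∀ t ∈ Icc 0 T, p (g t) = γ t) → LipschitzOnWith K g (Icc 0 T)) :
    ∃ g : ℝ → E, ContinuousOn g (Icc 0 1) ∧ g 0 = e ∧ ∀ t ∈ Icc (0 : ℝ) 1, p (g t) = γ t := by
  let S : Set ℝ := {T | ∃ g : ℝ → E, ContinuousOn g (Icc 0 T) ∧ g 0 = e ∧
    ∀ t ∈ Icc 0 T, p (g t) = γ t}
  have hdown : ∀ {s T}, T ∈ S → s ≤ T → s ∈ S := fun ⟨g, hg, hg0, hgγ⟩ hs ↦
    ⟨g, hg.mono (Icc_subset_Icc_right hs), hg0, fun t ht ↦ hgγ t (Icc_subset_Icc_right hs ht)⟩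
  have hzero : (0 : ℝ) ∈ S := ⟨fun _ ↦ e, continuousOn_const, rfl, by
    intro t ht
    rw [Icc_self, mem_singleton_iff] at ht
    rw [ht, he]⟩
  have hclosed : IsClosed (S ∩ Icc 0 1) := by
    refine isClosed_of_closure_subset fun T hT ↦ ?_
    have hT01 : T ∈ Icc (0 : ℝ) 1 :=
      closure_minimal inter_subset_right isClosed_Icc hT
    refine ⟨?_, hT01⟩
    rcases hT01.1.eq_or_lt with rfl | hT0
    · exact hzero
    have hlt : ∀ s < T, s ∈ S := fun s hs ↦ by
      obtain ⟨u, hu, huS⟩ := mem_closure_iff.1 hT (Ioi s) isOpen_Ioi hs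
      exact hdown huS.1 (le_of_lt hu)
    have : Nonempty E := ⟨e⟩
    choose! g hg hg0 hgγ using hlt
    let G : ℝ → E := fun s ↦ g s s
    have hGg : ∀ s u, 0 ≤ s → s ≤ u → u < T → G s = g u s := fun s u h0 hsu hu ↦
      (T2Space.isSeparatedMap p).eqOn_of_comp_eqOn hp.isLocallyInjective isPreconnected_Icc
        (hg s (hsu.trans_lt hu)) ((hg u hu).mono (Icc_subset_Icc_right hsu))
        (fun t ht ↦ (hgγ s (hsu.trans_lt hu) t ht).trans
          (hgγ u hu t (Icc_subset_Icc_right hsu ht)).symm)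
        (left_mem_Icc.2 h0) ((hg0 s (hsu.trans_lt hu)).trans (hg0 u hu).symm)
        (right_mem_Icc.2 h0)
    have hG : LipschitzOnWith K G (Ico 0 T) := by
      intro s hs u hu
      have hm : max s u < T := max_lt hs.2 hu.2
      rw [hGg s _ hs.1 (le_max_left s u) hm, hGg u _ hu.1 (le_max_right s u) hm]
      exact hK _ ⟨hs.1.trans (le_max_left _ _), hm.le.trans hT01.2⟩ _ (hg _ hm) (hg0 _ hm)
        (hgγ _ hm) ⟨hs.1, le_max_left _ _⟩ ⟨hu.1, le_max_right _ _⟩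
    have hGγ : ∀ s ∈ Ico 0 T, p (G s) = γ s := fun s hs ↦
      hgγ s hs.2 s (right_mem_Icc.2 hs.1)
    have hne : (𝓝[Ico 0 T] T).NeBot := by
      rw [← mem_closure_iff_nhdsWithin_neBot, closure_Ico hT0.ne]
      exact right_mem_Icc.2 hT0.le
    obtain ⟨L, hL⟩ : ∃ L, Tendsto G (𝓝[Ico 0 T] T) (𝓝 L) := by
      refine cauchy_map_iff_exists_tendsto.1 ?_
      exact (cauchy_nhds.mono nhdsWithin_le_nhds).map_of_le hG.uniformContinuousOn
        (le_principal_iff.2 self_mem_nhdsWithin)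
    have hpL : p L = γ T := by
      refine tendsto_nhds_unique ((hp.continuous.tendsto L).comp hL)
        ((hγ.continuousWithinAt (s := Ico 0 T)).tendsto.congr' ?_)
      filter_upwards [self_mem_nhdsWithin] with s hs using (hGγ s hs).symm
    refine ⟨Function.update G T L, ?_, ?_, fun t ht ↦ ?_⟩
    · rw [continuousOn_update_iff, Icc_sdiff_right]
      exact ⟨hG.continuousOn, fun _ ↦ hL⟩
    · rw [Function.update_of_ne hT0.ne]
      exact hg0 0 hT0
    · rcases ht.2.eq_or_lt with rfl | h
      · rwa [Function.update_self]
      · rw [Function.update_of_ne h.ne]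
        exact hGγ t ⟨ht.1, h⟩
  refine hclosed.Icc_subset_of_forall_exists_gt hzero ?_ (right_mem_Icc.2 zero_le_one)
  rintro T ⟨⟨g, hg, hg0, hgγ⟩, hT⟩ u hu
  obtain ⟨q, hq, rfl⟩ := hp (g T)
  have hgT : q (g T) = γ T := hgγ T (right_mem_Icc.2 hT.1)
  have hmem : γ ⁻¹' q.target ∈ 𝓝[≥] T := mem_nhdsWithin_of_mem_nhds <|
    hγ.continuousAt.preimage_mem_nhds (q.open_target.mem_nhds (hgT ▸ q.map_source hq))
  obtain ⟨w, hw, hwt⟩ := mem_nhdsGE_iff_exists_Icc_subset.1 hmem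
  let v := min w u
  have hTv : T < v := lt_min hw hu
  have hvt : ∀ t ∈ Icc T v, γ t ∈ q.target := fun t ht ↦ hwt ⟨ht.1, ht.2.trans (min_le_left _ _)⟩
  have hleft : EqOn (fun t ↦ if t ≤ T then g t else q.symm (γ t)) g (Icc 0 T) :=
    fun t ht ↦ if_pos ht.2
  have hright : EqOn (fun t ↦ if t ≤ T then g t else q.symm (γ t)) (q.symm ∘ γ) (Icc T v) := by
    intro t ht
    rcases ht.1.eq_or_lt with rfl | h
    · simp [← hgT, q.left_inv hq]
    · simp [h.not_ge]
  refine ⟨v, ⟨fun t ↦ if t ≤ T then g t else q.symm (γ t), ?_, ?_, fun t ht ↦ ?_⟩,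
    hTv, min_le_right _ _⟩
  · rw [← Icc_union_Icc_eq_Icc hT.1 hTv.le]
    exact (hg.congr hleft).union_of_isClosed
      ((q.continuousOn_symm.comp hγ.continuousOn hvt).congr hright) isClosed_Icc isClosed_Icc
  · simpa [hT.1] using hg0
  · rcases le_total t T with h | h
    · exact (congrArg q (hleft ⟨ht.1, h⟩)).trans (hgγ t ⟨ht.1, h⟩)
    · exact (congrArg q (hright ⟨h, ht.2⟩)).trans (q.right_inv (hvt t ⟨h, ht.2⟩))

/-- A continuous lift of a differentiable path through a map with invertible strict derivatives is
differentiable. -/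
theorem HasStrictFDerivAt.hasDerivWithinAt_lift {X Y : Type*} [NormedAddCommGroup X]
    [NormedSpace ℝ X] [CompleteSpace X] [NormedAddCommGroup Y] [NormedSpace ℝ Y]
    {f : X → Y} {A : X ≃L[ℝ] Y} {γ : ℝ → Y} {v : Y} {g : ℝ → X} {s : Set ℝ} {t : ℝ}
    (hf : HasStrictFDerivAt f (A : X →L[ℝ] Y) (g t)) (hγ : HasDerivWithinAt γ v s t)
    (hg : ContinuousWithinAt g s t) (ht : t ∈ s) (hlift : ∀ u ∈ s, f (g u) = γ u) :
    HasDerivWithinAt g (A.symm v) s t := by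
  have hφ := hf.to_localInverse.hasFDerivAt
  rw [hlift t ht] at hφ
  refine (hφ.comp_hasDerivWithinAt t hγ).congr_of_eventuallyEq_of_mem ?_ ht
  filter_upwards [hg.eventually hf.eventually_left_inverse, self_mem_nhdsWithin] with u hu hus
  rw [Function.comp_apply, ← hlift u hus, hu]

/-- Sublevel sets of the norm of a coercive map are bounded. -/
theorem exists_norm_le_of_norm_map_le {X Y : Type*} [SeminormedAddCommGroup X]
    [SeminormedAddCommGroup Y] {f : X → Y}
    (hf : ∀ x : ℕ → X, Tendsto (fun n ↦ ‖x n‖) atTop atTop →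
      Tendsto (fun n ↦ ‖f (x n)‖) atTop atTop) (C : ℝ) :
    ∃ R, ∀ x, ‖f x‖ ≤ C → ‖x‖ ≤ R := by
  by_contra! h
  choose x hxC hx using fun n : ℕ ↦ h n
  obtain ⟨n, hn⟩ := ((hf x (tendsto_atTop_mono (fun n ↦ (hx n).le)
    tendsto_natCast_atTop_atTop)).eventually_gt_atTop C).exists
  exact hn.not_ge (hxC n)

theorem global_inverse_coercive
    {X Y : Type*} [NormedAddCommGroup X] [NormedSpace ℝ X] [CompleteSpace X]
    [NormedAddCommGroup Y] [NormedSpace ℝ Y] [CompleteSpace Y]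
    (f : X → Y) (f' : X → (X →L[ℝ] Y)) (finv : X → (Y →L[ℝ] X))
    (hf' : ∀ x : X, HasFDerivAt f (f' x) x)
    (hinv : ∀ x : X,
      (f' x).comp (finv x) = ContinuousLinearMap.id ℝ Y ∧
      (finv x).comp (f' x) = ContinuousLinearMap.id ℝ X)
    (hlip : LocallyLipschitz finv)
    (hcoercive : ∀ xn : ℕ → X,
      Filter.Tendsto (fun n => ‖xn n‖) Filter.atTop Filter.atTop →
      Filter.Tendsto (fun n => ‖f (xn n)‖) Filter.atTop Filter.atTop)
    (hbdd : ∀ P : Set X, IsClosed P → Bornology.IsBounded P →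
      ∃ M : ℝ, ∀ x ∈ P, ‖finv x‖ ≤ M) :
    Function.Surjective f ∧
      ∃ ψ : Y → X, Continuous ψ ∧ ∀ y : Y, f (ψ y) = y := by
  suffices h : ∃ ψ : Y → X, Continuous ψ ∧ ∀ y, f (ψ y) = y from
    ⟨fun y ↦ ⟨h.choose y, h.choose_spec.2 y⟩, h⟩
  let A : X → X ≃L[ℝ] Y := fun x ↦ .equivOfInverse' (f' x) (finv x) (hinv x).1 (hinv x).2
  have hf'_eq : f' = fun x ↦ (finv x).inverse :=
    funext fun x ↦ (ContinuousLinearMap.inverse_eq (hinv x).2 (hinv x).1).symm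
  have hf'_cont : Continuous f' := continuous_iff_continuousAt.2 fun x ↦ by
    rw [hf'_eq]
    exact (contDiffAt_map_inverse (n := 0) (A x).symm).continuousAt.comp
      (f := finv) hlip.continuous.continuousAt
  have hstrict : ∀ x, HasStrictFDerivAt f (A x : X →L[ℝ] Y) x := fun x ↦
    hasStrictFDerivAt_of_hasFDerivAt_of_continuousAt (.of_forall hf') hf'_cont.continuousAt
  have hhomeo : IsLocalHomeomorph f := .mk f fun x ↦
    ⟨(hstrict x).toOpenPartialHomeomorph f, (hstrict x).mem_toOpenPartialHomeomorph_source,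
      fun _ _ ↦ rfl⟩
  have hlift : ∀ y, ∃ g : ℝ → X, ContinuousOn g (Icc 0 1) ∧ g 0 = 0 ∧
      ∀ t ∈ Icc (0 : ℝ) 1, f (g t) = AffineMap.lineMap (f 0) y t := by
    intro y
    obtain ⟨R, hR⟩ := exists_norm_le_of_norm_map_le hcoercive (max ‖f 0‖ ‖y‖)
    obtain ⟨M, hM⟩ := hbdd (Metric.closedBall 0 R) Metric.isClosed_closedBall
      Metric.isBounded_closedBall
    refine hhomeo.exists_lift_Icc_of_lipschitzOnWith (K := (M * ‖y - f 0‖).toNNReal)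
      AffineMap.lineMap_continuous (by simp) fun T hT g hg _ hgγ ↦ ?_
    refine (convex_Icc 0 T).lipschitzOnWith_of_nnnorm_hasDerivWithin_le
      (fun t ht ↦ (hstrict (g t)).hasDerivWithinAt_lift
        AffineMap.hasDerivWithinAt_lineMap (hg t ht) ht hgγ) fun t ht ↦ ?_
    rw [← NNReal.coe_le_coe, coe_nnnorm]
    refine le_trans ?_ (Real.le_coe_toNNReal _)
    refine (finv (g t)).le_of_opNorm_le (hM _ (mem_closedBall_zero_iff.2 (hR _ ?_))) _
    rw [hgγ t ht]
    exact (convexOn_norm convex_univ).le_max_of_mem_segment (mem_univ _) (mem_univ _)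
      (lineMap_mem_segment ℝ _ _ ⟨ht.1, ht.2.trans hT.2⟩)
  choose g hg hg0 hgγ using hlift
  have hcont : Continuous fun z : I × Y ↦ g z.2 z.1 :=
    hhomeo.continuous_lift (T2Space.isSeparatedMap f)
      ⟨fun z : I × Y ↦ AffineMap.lineMap (f 0) z.2 (z.1 : ℝ), by
        simp only [AffineMap.lineMap_apply]; fun_prop⟩
      (funext fun z ↦ hgγ z.2 z.1 z.1.2) (by simpa [hg0] using continuous_const)
      fun y ↦ (hg y).comp_continuous continuous_subtype_val Subtype.prop
  refine ⟨fun y ↦ g y 1, hcont.comp (Continuous.prodMk_right (1 : I)), fun y ↦ ?_⟩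
  simpa using hgγ y 1 (right_mem_Icc.2 zero_le_one)
end
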